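/- There exist constants c₁, c₂ > 0 and x₀ ≥ 3 such that for all real x ≥ x₀, the number of positive integers n ≤ x all of whose prime factors are congruent to 5 modulo 6 lies between c₁·x/(log x)^{1/2} and c₂·x/(log x)^{1/2}. -/

import Mathlib

/-!
Let `χ` be the nonprincipal character modulo `6`, of which only the properties in `IsSignCharacter`
matter, and `χ₀` the principal one. Let `f` and `h` be the indicators of the integers composed only
of primes with `χ p = -1` and with `χ p = 1` respectively. Comparing Euler factors gives
`h * f = χ₀`, `h * χf = χ` and `f * χf = q`, where `q` is the indicator of the squares supported by
`f`; hence `f * f * χ = χ₀ * q` and `χ₀ * χ = h * h * q`. The partial sums of `L(1, χ)` lie between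
two positive constants, so these identities bound the squares of `∑ f(n) / n` and `∑ h(n) / n` over
`n ≤ N` by multiples of `log N`, while `h * f = χ₀` bounds their product from below by a multiple
of `log N`. Thus `∑ f(n) / n` has order exactly `√(log N)`.

To remove the weight `1 / n`, sum `f log = f * fΛ` over `n ≤ N`: the left side is
`∑ f(n) log N + O(N)`, and since `∑ f(d)Λ(d)` over `d ≤ y` has order `y`, by Chebyshev's bound from
above and by Mertens' theorem for the primes with `χ p = -1` from below, the right side is of order
`N ∑ f(n) / n`.
-/

section

open ArithmeticFunction Asymptotics Filter Finset
open scoped ArithmeticFunction.zeta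

/-- Complete multiplicativity of an arithmetic function; Mathlib's `IsMultiplicative` only concerns
coprime arguments. -/
def CompletelyMultiplicative {R : Type*} [MonoidWithZero R] (f : ArithmeticFunction R) : Prop :=
  f 1 = 1 ∧ ∀ m n, f (m * n) = f m * f n

namespace CompletelyMultiplicative

variable {R : Type*} [CommSemiring R] {f g h : ArithmeticFunction R}

lemma isMultiplicative (hf : CompletelyMultiplicative f) : f.IsMultiplicative :=
  ⟨hf.1, fun _ ↦ hf.2 _ _⟩

lemma map_pow (hf : CompletelyMultiplicative f) (n k : ℕ) : f (n ^ k) = f n ^ k := by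
  induction k with
  | zero => simp [hf.1]
  | succ k ih => rw [pow_succ, hf.2, ih, pow_succ]

lemma pmul (hf : CompletelyMultiplicative f) (hg : CompletelyMultiplicative g) :
    CompletelyMultiplicative (f.pmul g) :=
  ⟨by simp [hf.1, hg.1], fun m n ↦ by simp only [pmul_apply, hf.2, hg.2]; ring⟩

lemma pmul_mul (hf : CompletelyMultiplicative f) (u v : ArithmeticFunction R) :
    f.pmul (u * v) = f.pmul u * f.pmul v := by
  ext n
  simp only [pmul_apply, mul_apply, mul_sum]
  refine sum_congr rfl fun x hx ↦ ?_
  rw [← (Nat.mem_divisorsAntidiagonal.1 hx).1, hf.2]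
  ring

lemma ext_prime (hf : CompletelyMultiplicative f) (hg : CompletelyMultiplicative g)
    (hfg : ∀ p, p.Prime → f p = g p) : f = g :=
  (IsMultiplicative.eq_iff_eq_on_prime_powers _ hf.isMultiplicative _ hg.isMultiplicative).2
    fun p k hp ↦ by rw [hf.map_pow, hg.map_pow, hfg p hp]

lemma mul_apply_prime_pow (hf : CompletelyMultiplicative f) (hg : CompletelyMultiplicative g)
    {p : ℕ} (hp : p.Prime) (k : ℕ) :
    (f * g) (p ^ k) = ∑ i ∈ range (k + 1), f p ^ i * g p ^ (k - i) := by
  rw [mul_apply, Nat.sum_divisorsAntidiagonal (f := fun a b ↦ f a * g b),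
    Nat.sum_divisors_prime_pow hp]
  refine sum_congr rfl fun i hi ↦ ?_
  rw [Nat.pow_div (mem_range_succ_iff.1 hi) hp.pos, hf.map_pow, hg.map_pow]

/-- At each prime, one of the two Euler factors of `f * g` is trivial. -/
lemma mul_eq_of_prime [NoZeroDivisors R] (hf : CompletelyMultiplicative f)
    (hg : CompletelyMultiplicative g) (hh : CompletelyMultiplicative h)
    (hfg : ∀ p, p.Prime → f p * g p = 0) (hadd : ∀ p, p.Prime → f p + g p = h p) : f * g = h := by
  refine (IsMultiplicative.eq_iff_eq_on_prime_powers _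
    (hf.isMultiplicative.mul hg.isMultiplicative) _ hh.isMultiplicative).2 fun p k hp ↦ ?_
  rw [hf.mul_apply_prime_pow hg hp, hh.map_pow, ← hadd p hp]
  rcases mul_eq_zero.1 (hfg p hp) with h0 | h0
  · simp [h0, zero_pow_eq]
  · rw [h0, sum_range_succ, sum_eq_zero fun i hi ↦ ?_]
    · simp
    · rw [zero_pow (Nat.sub_ne_zero_of_lt (mem_range.1 hi)), mul_zero]

lemma pmul_log {f : ArithmeticFunction ℝ} (hf : CompletelyMultiplicative f) :
    f.pmul log = f.pmul Λ * f := by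
  rw [← vonMangoldt_mul_zeta, hf.pmul_mul, ArithmeticFunction.pmul_zeta]

end CompletelyMultiplicative

open Classical in
/-- The indicator of the positive integers all of whose prime factors lie in `P`. -/
noncomputable def factoredIndicator (P : Set ℕ) : ArithmeticFunction ℝ :=
  ⟨fun n ↦ if n ≠ 0 ∧ ∀ p, p.Prime → p ∣ n → p ∈ P then 1 else 0, by simp⟩

namespace factoredIndicator

variable (P : Set ℕ)

open Classical in
lemma apply (n : ℕ) : factoredIndicator P n =
    if n ≠ 0 ∧ ∀ p, p.Prime → p ∣ n → p ∈ P then 1 else 0 := rfl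

lemma nonneg (n : ℕ) : 0 ≤ factoredIndicator P n := by
  rw [apply]; split_ifs <;> norm_num

lemma le_one (n : ℕ) : factoredIndicator P n ≤ 1 := by
  rw [apply]; split_ifs <;> norm_num

lemma apply_prime {p : ℕ} (hp : p.Prime) [Decidable (p ∈ P)] :
    factoredIndicator P p = if p ∈ P then 1 else 0 := by
  have : (p ≠ 0 ∧ ∀ r, r.Prime → r ∣ p → r ∈ P) ↔ p ∈ P :=
    ⟨fun h ↦ h.2 p hp dvd_rfl,
      fun h ↦ ⟨hp.ne_zero, fun r hr hd ↦ by rwa [(Nat.prime_dvd_prime_iff_eq hr hp).1 hd]⟩⟩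
  simp only [apply, this]

lemma completelyMultiplicative : CompletelyMultiplicative (factoredIndicator P) := by
  classical
  refine ⟨by simp +contextual [apply, Nat.dvd_one, Nat.not_prime_one], fun m n ↦ ?_⟩
  have : (m * n ≠ 0 ∧ ∀ p, p.Prime → p ∣ m * n → p ∈ P) ↔
      (m ≠ 0 ∧ ∀ p, p.Prime → p ∣ m → p ∈ P) ∧ (n ≠ 0 ∧ ∀ p, p.Prime → p ∣ n → p ∈ P) := by
    simp +contextual only [ne_eq, mul_eq_zero, Nat.Prime.dvd_mul]
    grind
  simp only [apply, this, ite_and, mul_ite, mul_zero, mul_one]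
  split_ifs <;> simp_all

end factoredIndicator

open Classical in
/-- The indicator of the positive perfect squares. -/
noncomputable def squareIndicator : ArithmeticFunction ℝ :=
  ⟨fun n ↦ if n ≠ 0 ∧ IsSquare n then 1 else 0, by simp⟩

namespace squareIndicator

open Classical in
lemma apply (n : ℕ) : squareIndicator n = if n ≠ 0 ∧ IsSquare n then 1 else 0 := rfl

lemma nonneg (n : ℕ) : 0 ≤ squareIndicator n := by
  rw [apply]; split_ifs <;> norm_num

lemma isMultiplicative : squareIndicator.IsMultiplicative := by
  classical
  have isSquare_left {m n : ℕ} (hmn : m.Coprime n) (h : IsSquare (m * n)) : IsSquare m := by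
    obtain ⟨r, hr⟩ := h
    obtain ⟨d, hd⟩ := exists_eq_pow_of_mul_eq_pow (a := m) (Nat.isUnit_iff.2 hmn)
      (hr.trans (sq r).symm)
    exact ⟨d, hd.trans (sq d)⟩
  refine ⟨by simp [apply], fun {m n} hmn ↦ ?_⟩
  have : IsSquare (m * n) ↔ IsSquare m ∧ IsSquare n :=
    ⟨fun h ↦ ⟨isSquare_left hmn h, isSquare_left hmn.symm (mul_comm m n ▸ h)⟩,
      fun h ↦ h.1.mul h.2⟩
  simp only [apply, this, mul_ne_zero_iff, mul_ite, mul_one, mul_zero]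
  grind

lemma apply_prime_pow {p : ℕ} (hp : p.Prime) (k : ℕ) :
    squareIndicator (p ^ k) = if Even k then 1 else 0 := by
  have : IsSquare (p ^ k) ↔ Even k := by
    refine ⟨fun ⟨r, hr⟩ ↦ ?_, fun h ↦ h.isSquare_pow p⟩
    have hr0 : r ≠ 0 := by rintro rfl; exact pow_ne_zero k hp.ne_zero (by simpa using hr)
    have := congrArg (fun n ↦ n.factorization p) hr
    simp only [hp.factorization_pow, Nat.factorization_mul hr0 hr0, Finsupp.single_eq_same,
      Finsupp.add_apply] at this
    exact ⟨_, this⟩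
  simp [apply, this, hp.ne_zero]

end squareIndicator

lemma completelyMultiplicative_zeta : CompletelyMultiplicative (ζ : ArithmeticFunction ℝ) :=
  ⟨by simp, fun m n ↦ by simp only [natCoe_apply, zeta_apply, mul_eq_zero, Nat.cast_ite]; grind⟩

lemma completelyMultiplicative_liouville :
    CompletelyMultiplicative (liouville : ArithmeticFunction ℝ) :=
  ⟨by simp [liouville_apply_one], fun m n ↦ by simp [liouville_apply_mul]⟩

lemma liouville_prime {p : ℕ} (hp : p.Prime) : (liouville : ArithmeticFunction ℝ) p = -1 := by
  simp [liouville_apply hp.ne_zero, cardFactors_apply_prime hp]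

lemma liouville_mul_zeta :
    (liouville : ArithmeticFunction ℝ) * (ζ : ArithmeticFunction ℝ) = squareIndicator := by
  refine (IsMultiplicative.eq_iff_eq_on_prime_powers _
    (completelyMultiplicative_liouville.isMultiplicative.mul isMultiplicative_zeta.natCast) _
    squareIndicator.isMultiplicative).2 fun p k hp ↦ ?_
  rw [coe_mul_zeta_apply, Nat.sum_divisors_prime_pow hp, squareIndicator.apply_prime_pow hp]
  simp only [completelyMultiplicative_liouville.map_pow, liouville_prime hp, neg_one_geom_sum,
    Nat.even_add_one, ite_not]

section AbelSummation

variable {u a : ℕ → ℝ} {C : ℝ}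

lemma sum_Ioc_mul_mem_Icc_of_antitone {m n : ℕ} (hmn : m ≤ n)
    (hu0 : ∀ N, 0 ≤ ∑ k ∈ Ioc 0 N, u k) (huC : ∀ N, ∑ k ∈ Ioc 0 N, u k ≤ C)
    (ha0 : ∀ k, 0 ≤ a k) (ha : ∀ k, m ≤ k → a (k + 1) ≤ a k) :
    ∑ k ∈ Ioc m n, u k * a k ∈
      Set.Icc (-(∑ k ∈ Ioc 0 m, u k) * a m) ((C - ∑ k ∈ Ioc 0 m, u k) * a m) := by
  set S : ℕ → ℝ := fun N ↦ ∑ k ∈ Ioc 0 N, u k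
  suffices h : ∑ k ∈ Ioc m n, u k * a k - S n * a n ∈
      Set.Icc (-(S m) * a m) ((C - S m) * a m - C * a n) by
    have := mul_nonneg (hu0 n) (ha0 n)
    have := mul_le_mul_of_nonneg_right (huC n) (ha0 n)
    constructor <;> linarith [h.1, h.2]
  induction n, hmn using Nat.le_induction with
  | base => simp [sub_mul]
  | succ n hn ih =>
    have hS : S (n + 1) = S n + u (n + 1) := sum_Ioc_succ_top n.zero_le u
    have h0 := mul_le_mul_of_nonneg_left (ha n hn) (hu0 n)
    have hC := mul_le_mul_of_nonneg_left (ha n hn) (sub_nonneg.2 (huC n))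
    rw [sum_Ioc_succ_top hn, hS]
    constructor <;> linarith [ih.1, ih.2]

lemma abs_sum_Ioc_mul_le_of_antitone {m n : ℕ} (hmn : m ≤ n)
    (hu0 : ∀ N, 0 ≤ ∑ k ∈ Ioc 0 N, u k) (huC : ∀ N, ∑ k ∈ Ioc 0 N, u k ≤ C)
    (ha0 : ∀ k, 0 ≤ a k) (ha : ∀ k, m ≤ k → a (k + 1) ≤ a k) :
    |∑ k ∈ Ioc m n, u k * a k| ≤ C * a m := by
  have h := sum_Ioc_mul_mem_Icc_of_antitone hmn hu0 huC ha0 ha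
  have := mul_nonneg (hu0 m) (ha0 m)
  have := mul_le_mul_of_nonneg_right (huC m) (ha0 m)
  exact abs_le.2 ⟨by linarith [h.1], by linarith [h.2]⟩

lemma exists_abs_sum_Ioc_mul_le_of_antitone {m : ℕ}
    (hu0 : ∀ N, 0 ≤ ∑ k ∈ Ioc 0 N, u k) (huC : ∀ N, ∑ k ∈ Ioc 0 N, u k ≤ C)
    (ha0 : ∀ k, 0 ≤ a k) (ha : ∀ k, m ≤ k → a (k + 1) ≤ a k) :
    ∃ B, ∀ N, |∑ k ∈ Ioc 0 N, u k * a k| ≤ B := by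
  refine ⟨∑ k ∈ Ioc 0 m, |u k * a k| + C * a m, fun N ↦ ?_⟩
  have htail_nonneg := mul_nonneg ((hu0 m).trans (huC m)) (ha0 m)
  rcases le_total N m with hNm | hmN
  · calc |∑ k ∈ Ioc 0 N, u k * a k| ≤ ∑ k ∈ Ioc 0 N, |u k * a k| := abs_sum_le_sum_abs _ _
      _ ≤ ∑ k ∈ Ioc 0 m, |u k * a k| :=
        sum_le_sum_of_subset_of_nonneg (Ioc_subset_Ioc_right hNm) fun _ _ _ ↦ abs_nonneg _
      _ ≤ _ := le_add_of_nonneg_right htail_nonneg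
  · rw [← sum_Ioc_consecutive _ m.zero_le hmN]
    exact (abs_add_le _ _).trans (add_le_add (abs_sum_le_sum_abs _ _)
      (abs_sum_Ioc_mul_le_of_antitone hmN hu0 huC ha0 ha))

end AbelSummation

lemma convolution_nonneg {u v : ArithmeticFunction ℝ} (hu : ∀ n, 0 ≤ u n) (hv : ∀ n, 0 ≤ v n)
    (n : ℕ) : 0 ≤ (u * v) n := by
  rw [mul_apply]
  exact sum_nonneg fun x _ ↦ mul_nonneg (hu _) (hv _)

/-- The logarithmic partial sum `∑_{n ≤ N} u(n) / n`. -/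
noncomputable def logSum (u : ArithmeticFunction ℝ) (N : ℕ) : ℝ :=
  ∑ n ∈ Ioc 0 N, u n / n

namespace logSum

variable {u v : ArithmeticFunction ℝ}

lemma convolution (u v : ArithmeticFunction ℝ) (N : ℕ) :
    logSum (u * v) N = ∑ n ∈ Ioc 0 N, u n / n * logSum v (N / n) := by
  let inv : ArithmeticFunction ℝ := ⟨fun n ↦ (n : ℝ)⁻¹, by simp⟩
  have hinv : CompletelyMultiplicative inv := ⟨by simp [inv], fun m n ↦ by simp [inv, mul_comm]⟩
  have h (w : ArithmeticFunction ℝ) (n : ℕ) : w n / n = inv.pmul w n := by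
    rw [pmul_apply, div_eq_inv_mul]; rfl
  simp only [logSum, h, hinv.pmul_mul, sum_Ioc_mul_eq_sum_sum]

lemma nonneg (hu : ∀ n, 0 ≤ u n) (N : ℕ) : 0 ≤ logSum u N :=
  sum_nonneg fun n _ ↦ div_nonneg (hu n) n.cast_nonneg

lemma mono (hu : ∀ n, 0 ≤ u n) : Monotone (logSum u) := fun _ _ h ↦
  sum_le_sum_of_subset_of_nonneg (Ioc_subset_Ioc_right h)
    fun n _ _ ↦ div_nonneg (hu n) n.cast_nonneg

lemma le_of_le (h : ∀ n, u n ≤ v n) (N : ℕ) : logSum u N ≤ logSum v N :=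
  sum_le_sum fun n _ ↦ div_le_div_of_nonneg_right (h n) n.cast_nonneg

lemma sub_eq_sum_Ioc (u : ArithmeticFunction ℝ) {M N : ℕ} (h : M ≤ N) :
    logSum u N - logSum u M = ∑ n ∈ Ioc M N, u n / n := by
  rw [logSum, logSum, ← sum_Ioc_consecutive _ M.zero_le h, add_sub_cancel_left]

lemma convolution_le (hu : ∀ n, 0 ≤ u n) (hv : ∀ n, 0 ≤ v n) (N : ℕ) :
    logSum (u * v) N ≤ logSum u N * logSum v N := by
  rw [convolution, logSum, sum_mul]
  exact sum_le_sum fun n _ ↦ mul_le_mul_of_nonneg_left (mono hv (N.div_le_self n))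
    (div_nonneg (hu n) n.cast_nonneg)

lemma mul_le_convolution (hu : ∀ n, 0 ≤ u n) (hv : ∀ n, 0 ≤ v n) (N : ℕ) :
    logSum u N * logSum v N ≤ logSum (u * v) (N * N) := by
  have hu' (n : ℕ) : 0 ≤ u n / n := div_nonneg (hu n) n.cast_nonneg
  rw [convolution, logSum, sum_mul]
  calc ∑ n ∈ Ioc 0 N, u n / n * logSum v N
      ≤ ∑ n ∈ Ioc 0 N, u n / n * logSum v (N * N / n) := by
        refine sum_le_sum fun n hn ↦ mul_le_mul_of_nonneg_left (mono hv ?_) (hu' n)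
        rw [mem_Ioc] at hn
        exact (Nat.le_div_iff_mul_le hn.1).2 (Nat.mul_le_mul_left _ hn.2)
    _ ≤ ∑ n ∈ Ioc 0 (N * N), u n / n * logSum v (N * N / n) :=
        sum_le_sum_of_subset_of_nonneg (Ioc_subset_Ioc_right N.le_mul_self)
          fun n _ _ ↦ mul_nonneg (hu' n) (nonneg hv _)

lemma le_convolution (hu : ∀ n, 0 ≤ u n) (hv : ∀ n, 0 ≤ v n) (hv1 : v 1 = 1) (N : ℕ) :
    logSum u N ≤ logSum (u * v) N := by
  refine le_of_le (fun n ↦ ?_) N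
  rcases eq_or_ne n 0 with rfl | hn
  · simp
  · rw [mul_apply]
    simpa [hv1] using single_le_sum (f := fun x : ℕ × ℕ ↦ u x.1 * v x.2)
      (fun x _ ↦ mul_nonneg (hu _) (hv _))
      (show (n, 1) ∈ n.divisorsAntidiagonal by simpa using hn)

lemma zeta_eq_harmonic (N : ℕ) : logSum ζ N = harmonic N := by
  rw [harmonic_eq_sum_Icc, logSum]
  push_cast
  refine sum_congr rfl fun n hn ↦ ?_
  simp [zeta_apply, (mem_Ioc.1 hn).1.ne']

lemma log_le_zeta (N : ℕ) : Real.log N ≤ logSum ζ N := by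
  rcases N.eq_zero_or_pos with rfl | hN
  · simp [logSum]
  · rw [zeta_eq_harmonic]
    exact (Real.log_le_log (mod_cast hN) (by simp)).trans (log_add_one_le_harmonic N)

lemma factoredIndicator_le (P : Set ℕ) (N : ℕ) :
    logSum (factoredIndicator P) N ≤ 1 + Real.log N := by
  refine (le_of_le (v := ζ) (fun n ↦ ?_) N).trans
    ((zeta_eq_harmonic N).trans_le (harmonic_le_one_add_log N))
  rcases eq_or_ne n 0 with rfl | hn
  · simp
  · simpa [zeta_apply_ne hn] using factoredIndicator.le_one P n

lemma squareIndicator_le (N : ℕ) : logSum squareIndicator N ≤ ∑' k : ℕ, 1 / (k : ℝ) ^ 2 := by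
  classical
  have hsub : {n ∈ Ioc 0 N | IsSquare n} ⊆ (Ioc 0 N).image (· ^ 2) := by
    intro n hn
    obtain ⟨hnN, r, rfl⟩ := mem_filter.1 hn
    rw [mem_Ioc] at hnN
    exact mem_image.2 ⟨r, mem_Ioc.2 ⟨Nat.pos_of_mul_pos_left hnN.1,
      r.le_mul_self.trans hnN.2⟩, sq r⟩
  calc logSum squareIndicator N = ∑ n ∈ Ioc 0 N with IsSquare n, 1 / (n : ℝ) := by
        rw [logSum, sum_filter]
        refine sum_congr rfl fun n hn ↦ ?_
        simp only [squareIndicator.apply, (mem_Ioc.1 hn).1.ne', ne_eq, not_false_eq_true, true_and,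
          ite_div, zero_div]
    _ ≤ ∑ n ∈ (Ioc 0 N).image (fun k : ℕ ↦ k ^ 2), 1 / (n : ℝ) :=
        sum_le_sum_of_subset_of_nonneg hsub fun _ _ _ ↦ by positivity
    _ = ∑ k ∈ Ioc 0 N, 1 / (k : ℝ) ^ 2 := by
        rw [sum_image (Nat.pow_left_injective two_ne_zero).injOn]
        simp
    _ ≤ ∑' k : ℕ, 1 / (k : ℝ) ^ 2 :=
        (Real.summable_one_div_nat_pow.2 one_lt_two).sum_le_tsum _ fun _ _ ↦ by positivity

end logSum

section MertensEstimates

lemma exists_sum_vonMangoldt_le : ∃ C : ℝ, 0 ≤ C ∧ ∀ N : ℕ, ∑ n ∈ Ioc 0 N, Λ n ≤ C * N := by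
  refine ⟨Real.log 4 + 4, by positivity, fun N ↦ ?_⟩
  simpa [Chebyshev.psi] using Chebyshev.psi_le_const_mul_self (x := (N : ℝ)) N.cast_nonneg

lemma sum_log_le (N : ℕ) : ∑ n ∈ Ioc 0 N, Real.log n ≤ N * Real.log N := by
  have h (n : ℕ) (hn : n ∈ Ioc 0 N) : Real.log n ≤ Real.log N := by
    rw [mem_Ioc] at hn
    exact Real.log_le_log (mod_cast hn.1) (mod_cast hn.2)
  simpa using sum_le_card_nsmul _ _ _ h

lemma sum_log_eq_log_factorial (N : ℕ) :
    ∑ n ∈ Ioc 0 N, Real.log n = Real.log N.factorial := by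
  induction N with
  | zero => simp
  | succ n ih =>
    rw [sum_Ioc_succ_top n.zero_le, ih, Nat.factorial_succ, Nat.cast_mul,
      Real.log_mul (by positivity) (by positivity), add_comm]

lemma le_sum_log (N : ℕ) : N * Real.log N - N ≤ ∑ n ∈ Ioc 0 N, Real.log n := by
  rcases eq_or_ne N 0 with rfl | hN
  · simp
  have hfactorial := Stirling.le_log_factorial_stirling hN
  have : 0 ≤ Real.log N := Real.log_natCast_nonneg N
  have : 0 ≤ Real.log (2 * Real.pi) := Real.log_nonneg (by linarith [Real.pi_gt_three])
  rw [sum_log_eq_log_factorial]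
  linarith

lemma sum_log_eq_sum_vonMangoldt_mul (N : ℕ) :
    ∑ n ∈ Ioc 0 N, Real.log n = ∑ n ∈ Ioc 0 N, Λ n * ((N / n : ℕ) : ℝ) := by
  rw [← sum_Ioc_mul_zeta_eq_sum, vonMangoldt_mul_zeta]
  simp [log_apply]

lemma div_sub_one_le_natCast_div (N : ℕ) {n : ℕ} (hn : 0 < n) :
    (N : ℝ) / n - 1 ≤ ((N / n : ℕ) : ℝ) := by
  have h : (N : ℝ) < (N / n : ℕ) * n + n := mod_cast Nat.lt_div_mul_add (a := N) hn
  have hn' : (0 : ℝ) < n := mod_cast hn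
  rw [sub_le_iff_le_add, div_le_iff₀ hn']
  linarith

lemma div_le_two_mul_natCast_div {N n : ℕ} (hn : 0 < n) (hnN : n ≤ N) :
    (N : ℝ) / n ≤ 2 * ((N / n : ℕ) : ℝ) := by
  have : (1 : ℝ) ≤ (N / n : ℕ) := mod_cast Nat.div_pos hnN hn
  linarith [div_sub_one_le_natCast_div N hn]

lemma logSum.log_sub_one_le_vonMangoldt {N : ℕ} (hN : 0 < N) : Real.log N - 1 ≤ logSum Λ N := by
  have hN' : (0 : ℝ) < N := mod_cast hN
  have h : ∑ n ∈ Ioc 0 N, Real.log n ≤ N * logSum Λ N := by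
    rw [sum_log_eq_sum_vonMangoldt_mul, logSum, mul_sum]
    refine sum_le_sum fun n _ ↦ ?_
    calc Λ n * ((N / n : ℕ) : ℝ) ≤ Λ n * (N / n) := by
          gcongr; exact Nat.cast_div_le
      _ = N * (Λ n / n) := by ring
  refine le_of_mul_le_mul_left ?_ hN'
  linarith [le_sum_log N]

lemma logSum.exists_vonMangoldt_le :
    ∃ C : ℝ, ∀ N : ℕ, 0 < N → logSum Λ N ≤ Real.log N + C := by
  obtain ⟨C, -, hC⟩ := exists_sum_vonMangoldt_le
  refine ⟨C, fun N hN ↦ ?_⟩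
  have hN' : (0 : ℝ) < N := mod_cast hN
  have h : N * logSum Λ N - ∑ n ∈ Ioc 0 N, Λ n ≤ ∑ n ∈ Ioc 0 N, Real.log n := by
    rw [sum_log_eq_sum_vonMangoldt_mul, logSum, mul_sum, ← sum_sub_distrib]
    refine sum_le_sum fun n hn ↦ ?_
    calc (N : ℝ) * (Λ n / n) - Λ n = Λ n * (N / n - 1) := by ring
      _ ≤ Λ n * ((N / n : ℕ) : ℝ) := by
          gcongr; exact div_sub_one_le_natCast_div N (mem_Ioc.1 hn).1
  refine le_of_mul_le_mul_left ?_ hN'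
  linarith [sum_log_le N, hC N]

end MertensEstimates

/-- Choosing `K` large, the window `(N / K, N]` already carries a definite proportion of the sum. -/
lemma exists_mul_le_sum_of_log_le_logSum {u : ArithmeticFunction ℝ} (hu : ∀ n, 0 ≤ u n)
    {c B : ℝ} (hc : 0 < c) (hlog : ∀ M N : ℕ, 0 < M → M ≤ N →
      c * (Real.log N - Real.log M) - B ≤ logSum u N - logSum u M) :
    ∃ δ > 0, ∃ K > 0, ∀ N : ℕ, K ≤ N → δ * N ≤ ∑ n ∈ Ioc 0 N, u n := by
  obtain ⟨K, hK⟩ := exists_nat_ge (Real.exp ((B + 1) / c))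
  have hK0 : (0 : ℝ) < K := (Real.exp_pos _).trans_le hK
  have hK1 : 0 < K := mod_cast hK0
  have hlogK : B + 1 ≤ c * Real.log K := by
    rw [mul_comm, ← div_le_iff₀ hc]
    exact (Real.le_log_iff_exp_le hK0).2 hK
  refine ⟨1 / (2 * K), by positivity, K, hK1, fun N hN ↦ ?_⟩
  have hM1 : 0 < N / K := Nat.div_pos hN hK1
  have hMN : N / K ≤ N := N.div_le_self K
  have hMK : ((N / K : ℕ) : ℝ) * K ≤ N := mod_cast N.div_mul_le_self K
  have hfloor := div_le_two_mul_natCast_div hK1 hN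
  set M := N / K
  have : (1 : ℝ) ≤ M := mod_cast hM1
  have hwindow : 1 ≤ ∑ n ∈ Ioc M N, u n / n := by
    have hlogM : Real.log M + Real.log K ≤ Real.log N := by
      rw [← Real.log_mul (by positivity) hK0.ne']
      exact Real.log_le_log (by positivity) hMK
    have := mul_le_mul_of_nonneg_left hlogM hc.le
    linarith [hlog M N hM1 hMN, logSum.sub_eq_sum_Ioc u hMN]
  calc 1 / (2 * K) * (N : ℝ) = N / K / 2 := by field_simp
    _ ≤ M * 1 := by linarith
    _ ≤ M * ∑ n ∈ Ioc M N, u n / n := by gcongr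
    _ ≤ ∑ n ∈ Ioc M N, u n := by
        rw [mul_sum]
        refine sum_le_sum fun n hn ↦ ?_
        have hMn : (M : ℝ) ≤ n := mod_cast (mem_Ioc.1 hn).1.le
        rw [mul_div_left_comm]
        exact mul_le_of_le_one_right (hu n) (div_le_one_of_le₀ hMn n.cast_nonneg)
    _ ≤ ∑ n ∈ Ioc 0 N, u n :=
        sum_le_sum_of_subset_of_nonneg (Ioc_subset_Ioc_left M.zero_le) fun n _ _ ↦ hu n

section SumFromLogSum

variable {f : ArithmeticFunction ℝ}

lemma CompletelyMultiplicative.sum_mul_log (hf : CompletelyMultiplicative f) (N : ℕ) :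
    ∑ n ∈ Ioc 0 N, f n * Real.log n =
      ∑ m ∈ Ioc 0 N, f m * ∑ d ∈ Ioc 0 (N / m), f.pmul Λ d := by
  rw [← sum_Ioc_mul_eq_sum_sum, mul_comm, ← hf.pmul_log]
  rfl

lemma sum_mul_log_le (hf0 : ∀ n, 0 ≤ f n) (N : ℕ) :
    ∑ n ∈ Ioc 0 N, f n * Real.log n ≤ (∑ n ∈ Ioc 0 N, f n) * Real.log N := by
  rw [sum_mul]
  refine sum_le_sum fun n hn ↦ ?_
  rw [mem_Ioc] at hn
  exact mul_le_mul_of_nonneg_left (Real.log_le_log (mod_cast hn.1) (mod_cast hn.2)) (hf0 n)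

lemma le_sum_mul_log (hf1 : ∀ n, f n ≤ 1) (N : ℕ) :
    (∑ n ∈ Ioc 0 N, f n) * Real.log N - N ≤ ∑ n ∈ Ioc 0 N, f n * Real.log n := by
  have hterm : ∑ n ∈ Ioc 0 N, f n * (Real.log N - Real.log n) ≤
      ∑ n ∈ Ioc 0 N, (Real.log N - Real.log n) := by
    refine sum_le_sum fun n hn ↦ mul_le_of_le_one_left (sub_nonneg.2 ?_) (hf1 n)
    rw [mem_Ioc] at hn
    exact Real.log_le_log (mod_cast hn.1) (mod_cast hn.2)
  simp only [mul_sub, sum_sub_distrib, sum_const, Nat.card_Ioc, nsmul_eq_mul, ← sum_mul,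
    Nat.sub_zero] at hterm
  linarith [le_sum_log N]

lemma CompletelyMultiplicative.exists_sum_mul_log_le (hf : CompletelyMultiplicative f)
    (hf0 : ∀ n, 0 ≤ f n) (hf1 : ∀ n, f n ≤ 1) :
    ∃ C, ∀ N : ℕ, (∑ n ∈ Ioc 0 N, f n) * Real.log N ≤ C * (N * logSum f N) + N := by
  obtain ⟨C, hC0, hC⟩ := exists_sum_vonMangoldt_le
  refine ⟨C, fun N ↦ ?_⟩
  suffices h : ∑ n ∈ Ioc 0 N, f n * Real.log n ≤ C * (N * logSum f N) by
    linarith [le_sum_mul_log hf1 N]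
  rw [hf.sum_mul_log, logSum, mul_sum, mul_sum]
  refine sum_le_sum fun m _ ↦ ?_
  calc f m * ∑ d ∈ Ioc 0 (N / m), f.pmul Λ d ≤ f m * ∑ d ∈ Ioc 0 (N / m), Λ d := by
        gcongr with d
        · exact hf0 m
        · exact mul_le_of_le_one_left vonMangoldt_nonneg (hf1 d)
    _ ≤ f m * (C * ((N / m : ℕ) : ℝ)) := mul_le_mul_of_nonneg_left (hC _) (hf0 m)
    _ ≤ f m * (C * (N / m)) := by
        gcongr
        exacts [hf0 m, Nat.cast_div_le]
    _ = C * (N * (f m / m)) := by ring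

lemma CompletelyMultiplicative.mul_logSum_le_sum_mul_log (hf : CompletelyMultiplicative f)
    (hf0 : ∀ n, 0 ≤ f n) {δ : ℝ} (hδ : 0 ≤ δ) {K : ℕ} (hK : 0 < K)
    (hsum : ∀ N : ℕ, K ≤ N → δ * N ≤ ∑ n ∈ Ioc 0 N, f.pmul Λ n) (N : ℕ) :
    δ / 2 * (N * logSum f (N / K)) ≤ (∑ n ∈ Ioc 0 N, f n) * Real.log N := by
  refine le_trans ?_ (sum_mul_log_le hf0 N)
  have hfΛ (d : ℕ) : 0 ≤ f.pmul Λ d := mul_nonneg (hf0 d) vonMangoldt_nonneg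
  rw [hf.sum_mul_log, logSum, mul_sum, mul_sum]
  refine le_trans (sum_le_sum fun m hm ↦ ?_)
    (sum_le_sum_of_subset_of_nonneg (Ioc_subset_Ioc_right (N.div_le_self K))
      fun m _ _ ↦ mul_nonneg (hf0 m) (sum_nonneg fun d _ ↦ hfΛ d))
  rw [mem_Ioc] at hm
  have hKm : K ≤ N / m := by
    rw [Nat.le_div_iff_mul_le hm.1, mul_comm]
    exact (Nat.le_div_iff_mul_le hK).1 hm.2
  have hhalf : (N : ℝ) / m / 2 ≤ (N / m : ℕ) := by
    linarith [div_le_two_mul_natCast_div hm.1 (hm.2.trans (N.div_le_self K))]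
  calc δ / 2 * (N * (f m / m)) = f m * (δ * (N / m / 2)) := by ring
    _ ≤ f m * (δ * (N / m : ℕ)) := by
        gcongr
        exact hf0 m
    _ ≤ f m * ∑ d ∈ Ioc 0 (N / m), f.pmul Λ d :=
        mul_le_mul_of_nonneg_left (hsum _ hKm) (hf0 m)

end SumFromLogSum

section FinitePrimeSet

variable {P : Set ℕ}

/-- A finite Euler product. -/
lemma factoredIndicator.summable_mul_rpow (hP : P.Finite) {s : ℝ} (hs : 0 < s) :
    Summable fun n : ℕ ↦ factoredIndicator P n * (n : ℝ) ^ (-s) := by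
  classical
  let φ : ℕ →* ℝ :=
    { toFun n := (n : ℝ) ^ (-s)
      map_one' := by simp
      map_mul' m n := by rw [Nat.cast_mul, Real.mul_rpow m.cast_nonneg n.cast_nonneg] }
  have hφ {p : ℕ} (hp : p.Prime) : ‖φ p‖ < 1 := by
    refine (Real.norm_of_nonneg (Real.rpow_nonneg p.cast_nonneg _)).trans_lt ?_
    exact Real.rpow_lt_one_of_one_lt_of_neg (mod_cast hp.one_lt) (neg_lt_zero.2 hs)
  have h := (EulerProduct.summable_and_hasSum_factoredNumbers_prod_filter_prime_geometric hφ
    hP.toFinset).2.summable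
  rw [← Function.comp_def φ, summable_subtype_iff_indicator] at h
  refine h.congr fun n ↦ ?_
  have hmem : n ∈ Nat.factoredNumbers hP.toFinset ↔
      n ≠ 0 ∧ ∀ p, p.Prime → p ∣ n → p ∈ P := by
    simp +contextual [Nat.mem_factoredNumbers]
  simp only [Set.indicator_apply, hmem, factoredIndicator.apply, ite_mul, one_mul, zero_mul]
  rfl

lemma logSum.exists_factoredIndicator_le (hP : P.Finite) :
    ∃ C, ∀ N, logSum (factoredIndicator P) N ≤ C := by
  have h : Summable fun n : ℕ ↦ factoredIndicator P n / n := by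
    simpa only [Real.rpow_neg_one, div_eq_mul_inv] using
      factoredIndicator.summable_mul_rpow hP one_pos
  exact ⟨_, fun N ↦ h.sum_le_tsum (Ioc 0 N)
    fun n _ ↦ div_nonneg (factoredIndicator.nonneg P n) n.cast_nonneg⟩

lemma logSum.exists_factoredIndicator_pmul_log_le (hP : P.Finite) :
    ∃ C, ∀ N, logSum ((factoredIndicator P).pmul log) N ≤ C := by
  have h := (factoredIndicator.summable_mul_rpow hP one_half_pos).mul_left 2
  have hnonneg (n : ℕ) : 0 ≤ 2 * (factoredIndicator P n * (n : ℝ) ^ (-(1 / 2) : ℝ)) :=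
    mul_nonneg zero_le_two (mul_nonneg (factoredIndicator.nonneg P n) (by positivity))
  refine ⟨_, fun N ↦ (sum_le_sum fun n hn ↦ ?_).trans
    (h.sum_le_tsum (Ioc 0 N) fun n _ ↦ hnonneg n)⟩
  have hn0 : (0 : ℝ) < n := mod_cast (mem_Ioc.1 hn).1
  rw [pmul_apply, log_apply]
  calc factoredIndicator P n * Real.log n / n
      ≤ factoredIndicator P n * ((n : ℝ) ^ (1 / 2 : ℝ) / (1 / 2)) / n := by
        gcongr
        exacts [factoredIndicator.nonneg P n, Real.log_le_rpow_div n.cast_nonneg one_half_pos]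
    _ = 2 * (factoredIndicator P n * ((n : ℝ) ^ (1 / 2 : ℝ) / (n : ℝ) ^ (1 : ℝ))) := by
        rw [Real.rpow_one]; ring
    _ = 2 * (factoredIndicator P n * (n : ℝ) ^ (-(1 / 2) : ℝ)) := by
        rw [← Real.rpow_sub hn0]; norm_num

lemma logSum.exists_factoredIndicator_pmul_vonMangoldt_le (hP : P.Finite) :
    ∃ C, ∀ N, logSum ((factoredIndicator P).pmul Λ) N ≤ C := by
  obtain ⟨C, hC⟩ := logSum.exists_factoredIndicator_pmul_log_le hP
  have hcm := factoredIndicator.completelyMultiplicative P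
  refine ⟨C, fun N ↦ le_trans ?_ (hC N)⟩
  rw [hcm.pmul_log]
  exact logSum.le_convolution
    (fun n ↦ mul_nonneg (factoredIndicator.nonneg P n) vonMangoldt_nonneg)
    (factoredIndicator.nonneg P) hcm.1 N

end FinitePrimeSet

/-- A completely multiplicative function with values in `{-1, 0, 1}`, vanishing at finitely many
primes only, whose partial sums are bounded and nonnegative. Nonnegativity of the partial sums is
what makes `L(1, χ)` elementarily nonzero; it holds for the odd characters modulo `3`, `4` and `6`,
but not for every real character. -/
structure IsSignCharacter (χ : ArithmeticFunction ℝ) : Prop where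
  completelyMultiplicative : CompletelyMultiplicative χ
  apply_eq : ∀ n, χ n = -1 ∨ χ n = 0 ∨ χ n = 1
  finite_zeros : {p | p.Prime ∧ χ p = 0}.Finite
  sum_Ioc_nonneg : ∀ N, 0 ≤ ∑ n ∈ Ioc 0 N, χ n
  exists_sum_Ioc_le : ∃ C, ∀ N, ∑ n ∈ Ioc 0 N, χ n ≤ C

/-- The indicator of the integers composed of primes `p` with `χ p = -1`. -/
noncomputable abbrev minusIndicator (χ : ArithmeticFunction ℝ) : ArithmeticFunction ℝ :=
  factoredIndicator {p | χ p = -1}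

/-- The indicator of the integers composed of primes `p` with `χ p = 1`. -/
noncomputable abbrev plusIndicator (χ : ArithmeticFunction ℝ) : ArithmeticFunction ℝ :=
  factoredIndicator {p | χ p = 1}

/-- The indicator of the integers composed of primes `p` with `χ p = 0`. -/
noncomputable abbrev ramifiedIndicator (χ : ArithmeticFunction ℝ) : ArithmeticFunction ℝ :=
  factoredIndicator {p | p.Prime ∧ χ p = 0}

/-- The indicator of the integers composed of primes `p` with `χ p ≠ 0`: the principal character
attached to `χ`. -/
noncomputable abbrev principalIndicator (χ : ArithmeticFunction ℝ) : ArithmeticFunction ℝ :=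
  factoredIndicator {p | χ p ≠ 0}

namespace IsSignCharacter

variable {χ : ArithmeticFunction ℝ}

section ConvolutionIdentities

open factoredIndicator (apply_prime)

lemma ramified_mul_principal (χ : ArithmeticFunction ℝ) :
    ramifiedIndicator χ * principalIndicator χ = ζ := by
  classical
  refine (factoredIndicator.completelyMultiplicative _).mul_eq_of_prime
    (factoredIndicator.completelyMultiplicative _) completelyMultiplicative_zeta
    (fun p hp ↦ ?_) fun p hp ↦ ?_ <;>
  simp only [apply_prime _ hp, natCoe_apply, zeta_apply_ne hp.ne_zero, Set.mem_ofPred_eq, hp,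
    true_and] <;>
  split_ifs <;> simp_all

lemma plus_mul_minus (hχ : IsSignCharacter χ) :
    plusIndicator χ * minusIndicator χ = principalIndicator χ := by
  classical
  refine (factoredIndicator.completelyMultiplicative _).mul_eq_of_prime
    (factoredIndicator.completelyMultiplicative _) (factoredIndicator.completelyMultiplicative _)
    (fun p hp ↦ ?_) fun p hp ↦ ?_ <;>
  simp only [apply_prime _ hp, Set.mem_ofPred_eq] <;>
  rcases hχ.apply_eq p with h | h | h <;> norm_num [h]

lemma plus_mul_pmul_minus (hχ : IsSignCharacter χ) :
    plusIndicator χ * χ.pmul (minusIndicator χ) = χ := by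
  classical
  refine (factoredIndicator.completelyMultiplicative _).mul_eq_of_prime
    (hχ.completelyMultiplicative.pmul (factoredIndicator.completelyMultiplicative _))
    hχ.completelyMultiplicative (fun p hp ↦ ?_) fun p hp ↦ ?_ <;>
  simp only [pmul_apply, apply_prime _ hp, Set.mem_ofPred_eq] <;>
  rcases hχ.apply_eq p with h | h | h <;> norm_num [h]

lemma minus_mul_pmul_minus (hχ : IsSignCharacter χ) :
    minusIndicator χ * χ.pmul (minusIndicator χ) = (minusIndicator χ).pmul squareIndicator := by
  classical
  have hf := factoredIndicator.completelyMultiplicative {p | χ p = -1}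
  have hliouville : χ.pmul (minusIndicator χ) =
      (minusIndicator χ).pmul (liouville : ArithmeticFunction ℝ) := by
    refine (hχ.completelyMultiplicative.pmul hf).ext_prime
      (hf.pmul completelyMultiplicative_liouville) fun p hp ↦ ?_
    simp only [pmul_apply, apply_prime _ hp, liouville_prime hp, Set.mem_ofPred_eq]
    split_ifs with h <;> simp [h]
  rw [hliouville, ← liouville_mul_zeta, hf.pmul_mul, ArithmeticFunction.pmul_zeta, mul_comm]

lemma minus_mul_minus_mul (hχ : IsSignCharacter χ) :
    minusIndicator χ * minusIndicator χ * χ =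
      principalIndicator χ * (minusIndicator χ).pmul squareIndicator := by
  rw [← hχ.minus_mul_pmul_minus, ← hχ.plus_mul_minus]
  nth_rewrite 3 [← hχ.plus_mul_pmul_minus]
  ring

lemma principal_mul (hχ : IsSignCharacter χ) :
    principalIndicator χ * χ =
      plusIndicator χ * plusIndicator χ * (minusIndicator χ).pmul squareIndicator := by
  rw [← hχ.minus_mul_pmul_minus, ← hχ.plus_mul_minus]
  nth_rewrite 3 [← hχ.plus_mul_pmul_minus]
  ring

end ConvolutionIdentities

section LogSumCharacter

variable (hχ : IsSignCharacter χ)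
include hχ

lemma abs_apply_le_one (n : ℕ) : |χ n| ≤ 1 := by
  rcases hχ.apply_eq n with h | h | h <;> norm_num [h]

lemma logSum_sub_mem_Icc {C : ℝ} (hC : ∀ N, ∑ n ∈ Ioc 0 N, χ n ≤ C) {m n : ℕ} (hm : 0 < m)
    (hmn : m ≤ n) : logSum χ n - logSum χ m ∈
      Set.Icc (-(∑ k ∈ Ioc 0 m, χ k) / m) ((C - ∑ k ∈ Ioc 0 m, χ k) / m) := by
  simp only [logSum.sub_eq_sum_Ioc χ hmn, div_eq_mul_inv]
  exact sum_Ioc_mul_mem_Icc_of_antitone (a := fun k : ℕ ↦ (k : ℝ)⁻¹) hmn hχ.sum_Ioc_nonneg hC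
    (fun k ↦ by positivity)
    fun k hk ↦ inv_anti₀ (mod_cast hm.trans_le hk) (mod_cast k.le_succ)

lemma abs_logSum_sub_le {C : ℝ} (hC : ∀ N, ∑ n ∈ Ioc 0 N, χ n ≤ C) {m n : ℕ} (hm : 0 < m)
    (hmn : m ≤ n) : |logSum χ n - logSum χ m| ≤ C / m := by
  simp only [logSum.sub_eq_sum_Ioc χ hmn, div_eq_mul_inv]
  exact abs_sum_Ioc_mul_le_of_antitone (a := fun k : ℕ ↦ (k : ℝ)⁻¹) hmn hχ.sum_Ioc_nonneg hC
    (fun k ↦ by positivity)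
    fun k hk ↦ inv_anti₀ (mod_cast hm.trans_le hk) (mod_cast k.le_succ)

lemma logSum_one : logSum χ 1 = 1 := by
  simp [logSum, hχ.completelyMultiplicative.1]

lemma logSum_le {C : ℝ} (hC : ∀ N, ∑ n ∈ Ioc 0 N, χ n ≤ C) (N : ℕ) : logSum χ N ≤ C := by
  rcases N.eq_zero_or_pos with rfl | hN
  · simpa [logSum] using hC 0
  · have h := (hχ.logSum_sub_mem_Icc hC one_pos hN).2
    rw [show Ioc 0 1 = {1} from rfl, sum_singleton, Nat.cast_one, div_one,
      hχ.completelyMultiplicative.1, hχ.logSum_one] at h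
    linarith

/-- With `S(2) = 1 + χ(2)`, Abel summation from `2` gives
`L(N) ≥ 1 + χ(2) / 2 - S(2) / 2 = 1 / 2`. -/
lemma half_le_logSum {N : ℕ} (hN : 0 < N) : 1 / 2 ≤ logSum χ N := by
  obtain ⟨C, hC⟩ := hχ.exists_sum_Ioc_le
  have hχ1 : χ 1 = 1 := hχ.completelyMultiplicative.1
  have hIoc : Ioc 0 2 = {1, 2} := rfl
  have hlog2 : logSum χ 2 = 1 + χ 2 / 2 := by simp [logSum, hIoc, hχ1]
  rcases (Nat.succ_le_of_lt hN).eq_or_lt with rfl | hN2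
  · rw [Nat.succ_eq_add_one, zero_add, hχ.logSum_one]; norm_num
  · have h := (hχ.logSum_sub_mem_Icc hC two_pos hN2).1
    simp only [hIoc, sum_pair (by decide : 1 ≠ 2), hχ1, hlog2, Nat.cast_ofNat] at h
    linarith

lemma exists_abs_logSum_pmul_log_le : ∃ B, ∀ N, |logSum (χ.pmul log) N| ≤ B := by
  obtain ⟨C, hC⟩ := hχ.exists_sum_Ioc_le
  have h := exists_abs_sum_Ioc_mul_le_of_antitone (m := 3) (a := fun k ↦ Real.log k / k)
    hχ.sum_Ioc_nonneg hC (fun k ↦ by positivity) fun k hk ↦ ?_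
  · simpa only [logSum, pmul_apply, log_apply, mul_div_assoc] using h
  · have hk3 : Real.exp 1 ≤ k :=
      Real.exp_one_lt_three.le.trans (mod_cast hk)
    exact Real.log_div_self_antitoneOn hk3 (hk3.trans (mod_cast k.le_succ)) (mod_cast k.le_succ)

end LogSumCharacter

section Mertens

variable (hχ : IsSignCharacter χ)
include hχ

lemma abs_logSum_natDiv_sub_le {C : ℝ} (hC : ∀ N, ∑ n ∈ Ioc 0 N, χ n ≤ C) {n N : ℕ}
    (hn : 0 < n) (hnN : n ≤ N) : |logSum χ (N / n) - logSum χ N| ≤ C * (2 * n / N) := by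
  have hC0 : 0 ≤ C := (hχ.sum_Ioc_nonneg 0).trans (hC 0)
  have hn' : (0 : ℝ) < n := mod_cast hn
  have hN' : (0 : ℝ) < N := mod_cast hn.trans_le hnN
  have hdiv := Nat.div_pos hnN hn
  have hdiv' : (0 : ℝ) < (N / n : ℕ) := mod_cast hdiv
  rw [abs_sub_comm]
  refine (hχ.abs_logSum_sub_le hC hdiv (N.div_le_self n)).trans ?_
  rw [div_eq_mul_inv]
  gcongr
  rw [inv_le_iff_one_le_mul₀ hdiv', div_mul_eq_mul_div, one_le_div hN']
  linarith [(div_le_iff₀ hn').1 (div_le_two_mul_natCast_div hn hnN)]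

/-- In `χ log = χΛ * χ`, replacing the inner sum of `χ(m) / m` up to `N / n` by the one up to `N`
costs `O(n / N)`, which Chebyshev's bound absorbs. -/
lemma exists_abs_logSum_pmul_log_sub_mul_le : ∃ B, ∀ N : ℕ, 0 < N →
    |logSum (χ.pmul log) N - logSum (χ.pmul Λ) N * logSum χ N| ≤ B := by
  obtain ⟨C, hC⟩ := hχ.exists_sum_Ioc_le
  obtain ⟨D, -, hD⟩ := exists_sum_vonMangoldt_le
  have hC0 : 0 ≤ C := (hχ.sum_Ioc_nonneg 0).trans (hC 0)
  refine ⟨2 * C * D, fun N hN ↦ ?_⟩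
  have : (0 : ℝ) < N := mod_cast hN
  have hterm (n : ℕ) (hn : n ∈ Ioc 0 N) :
      |(χ.pmul Λ) n / n * (logSum χ (N / n) - logSum χ N)| ≤ 2 * C / N * Λ n := by
    rw [mem_Ioc] at hn
    have hn' : (0 : ℝ) < n := mod_cast hn.1
    have htail := hχ.abs_logSum_natDiv_sub_le hC hn.1 hn.2
    calc |(χ.pmul Λ) n / n * (logSum χ (N / n) - logSum χ N)|
        = |χ n| * Λ n / n * |logSum χ (N / n) - logSum χ N| := by
          rw [abs_mul, abs_div, pmul_apply, abs_mul, abs_of_nonneg vonMangoldt_nonneg,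
            Nat.abs_cast]
      _ ≤ 1 * Λ n / n * (C * (2 * n / N)) := by
          gcongr
          exact hχ.abs_apply_le_one n
      _ = 2 * C / N * Λ n := by field_simp
  rw [hχ.completelyMultiplicative.pmul_log, logSum.convolution, logSum, sum_mul,
    ← sum_sub_distrib]
  simp only [← mul_sub]
  calc |∑ n ∈ Ioc 0 N, (χ.pmul Λ) n / n * (logSum χ (N / n) - logSum χ N)|
      ≤ ∑ n ∈ Ioc 0 N, 2 * C / N * Λ n :=
        (abs_sum_le_sum_abs _ _).trans (sum_le_sum hterm)
    _ ≤ 2 * C / N * (D * N) := by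
        rw [← mul_sum]
        gcongr
        exact hD N
    _ = 2 * C * D := by field_simp

lemma exists_abs_logSum_pmul_vonMangoldt_le :
    ∃ B, ∀ N : ℕ, 0 < N → |logSum (χ.pmul Λ) N| ≤ B := by
  obtain ⟨A, hA⟩ := hχ.exists_abs_logSum_pmul_log_le
  obtain ⟨B, hB⟩ := hχ.exists_abs_logSum_pmul_log_sub_mul_le
  refine ⟨2 * (A + B), fun N hN ↦ ?_⟩
  have hL := hχ.half_le_logSum hN
  have hprod : |logSum (χ.pmul Λ) N| * logSum χ N ≤ A + B := by
    rw [← abs_of_nonneg (one_half_pos.le.trans hL), ← abs_mul]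
    have := abs_sub_abs_le_abs_sub (logSum (χ.pmul Λ) N * logSum χ N) (logSum (χ.pmul log) N)
    rw [abs_sub_comm] at this
    linarith [hA N, hB N hN]
  have := mul_le_mul_of_nonneg_left hL (abs_nonneg (logSum (χ.pmul Λ) N))
  linarith

lemma vonMangoldt_le (n : ℕ) : Λ n ≤ 2 * (minusIndicator χ).pmul Λ n + χ.pmul Λ n +
    (ramifiedIndicator χ).pmul Λ n := by
  classical
  by_cases hΛ : Λ n = 0
  · simp [hΛ]
  obtain ⟨p, k, hp, hk, rfl⟩ := (isPrimePow_nat_iff _).1 (vonMangoldt_ne_zero_iff.1 hΛ)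
  suffices h : 1 ≤ 2 * minusIndicator χ (p ^ k) + χ (p ^ k) + ramifiedIndicator χ (p ^ k) by
    have := mul_le_mul_of_nonneg_right h (vonMangoldt_nonneg (n := p ^ k))
    simp only [pmul_apply]
    linarith
  simp only [(factoredIndicator.completelyMultiplicative _).map_pow,
    hχ.completelyMultiplicative.map_pow, factoredIndicator.apply_prime _ hp, Set.mem_ofPred_eq, hp,
    true_and]
  rcases hχ.apply_eq p with h | h | h
  · rcases neg_one_pow_eq_or ℝ k with h' | h' <;> norm_num [h, h', hk.ne']
  · norm_num [h, hk.ne']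
  · norm_num [h, hk.ne']

lemma exists_log_sub_le_logSum_minus_pmul_vonMangoldt :
    ∃ B, ∀ M N : ℕ, 0 < M → M ≤ N → 1 / 2 * (Real.log N - Real.log M) - B ≤
      logSum ((minusIndicator χ).pmul Λ) N - logSum ((minusIndicator χ).pmul Λ) M := by
  obtain ⟨A, hA⟩ := logSum.exists_vonMangoldt_le
  obtain ⟨B, hB⟩ := hχ.exists_abs_logSum_pmul_vonMangoldt_le
  obtain ⟨C, hC⟩ := logSum.exists_factoredIndicator_pmul_vonMangoldt_le hχ.finite_zeros
  refine ⟨(1 + A + 2 * B + C) / 2, fun M N hM hMN ↦ ?_⟩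
  have hwindow : logSum Λ N - logSum Λ M ≤
      2 * (logSum ((minusIndicator χ).pmul Λ) N - logSum ((minusIndicator χ).pmul Λ) M) +
        (logSum (χ.pmul Λ) N - logSum (χ.pmul Λ) M) +
        (logSum ((ramifiedIndicator χ).pmul Λ) N - logSum ((ramifiedIndicator χ).pmul Λ) M) := by
    simp only [logSum.sub_eq_sum_Ioc _ hMN, mul_sum, ← sum_add_distrib]
    refine sum_le_sum fun n _ ↦ ?_
    rw [← mul_div_assoc, ← add_div, ← add_div]
    exact div_le_div_of_nonneg_right (hχ.vonMangoldt_le n) n.cast_nonneg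
  have hram : 0 ≤ logSum ((ramifiedIndicator χ).pmul Λ) M :=
    logSum.nonneg (fun n ↦ mul_nonneg (factoredIndicator.nonneg _ n) vonMangoldt_nonneg) M
  have hN := hM.trans_le hMN
  linarith [logSum.log_sub_one_le_vonMangoldt hN, hA M hM, (abs_le.1 (hB N hN)).2,
    (abs_le.1 (hB M hM)).1, hC N]

end Mertens

section LogSumIndicator

variable (hχ : IsSignCharacter χ)
include hχ

lemma exists_logSum_plus_sq_le :
    ∃ C, ∀ N : ℕ, logSum (plusIndicator χ) N ^ 2 ≤ C * (1 + 2 * Real.log N) := by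
  obtain ⟨C, hC⟩ := hχ.exists_sum_Ioc_le
  have hC0 : 0 ≤ C := (hχ.sum_Ioc_nonneg 0).trans (hC 0)
  have hplus := factoredIndicator.nonneg {p | χ p = 1}
  refine ⟨C, fun N ↦ ?_⟩
  calc logSum (plusIndicator χ) N ^ 2
      ≤ logSum (plusIndicator χ * plusIndicator χ) (N * N) :=
        (sq _).trans_le (logSum.mul_le_convolution hplus hplus N)
    _ ≤ logSum (principalIndicator χ * χ) (N * N) := by
        rw [hχ.principal_mul]
        exact logSum.le_convolution (convolution_nonneg hplus hplus)
          (fun n ↦ mul_nonneg (factoredIndicator.nonneg _ n) (squareIndicator.nonneg n))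
          ((factoredIndicator.completelyMultiplicative _).isMultiplicative.pmul
            squareIndicator.isMultiplicative).1 _
    _ ≤ logSum (principalIndicator χ) (N * N) * C := by
        rw [logSum.convolution, logSum, sum_mul]
        exact sum_le_sum fun n _ ↦ mul_le_mul_of_nonneg_left (hχ.logSum_le hC _)
          (div_nonneg (factoredIndicator.nonneg _ n) n.cast_nonneg)
    _ ≤ (1 + Real.log (N * N : ℕ)) * C := by
        gcongr
        exact logSum.factoredIndicator_le _ _
    _ = C * (1 + 2 * Real.log N) := by
        rw [← sq, Nat.cast_pow, Real.log_pow, Nat.cast_ofNat, mul_comm]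

lemma exists_logSum_minus_sq_le :
    ∃ C, ∀ N : ℕ, logSum (minusIndicator χ) N ^ 2 ≤ C * (1 + 2 * Real.log N) := by
  have hminus := factoredIndicator.nonneg {p | χ p = -1}
  have hminus_sq := convolution_nonneg hminus hminus
  have hsquare (n : ℕ) : 0 ≤ (minusIndicator χ).pmul squareIndicator n :=
    mul_nonneg (hminus n) (squareIndicator.nonneg n)
  refine ⟨2 * ∑' k : ℕ, 1 / (k : ℝ) ^ 2, fun N ↦ ?_⟩
  calc logSum (minusIndicator χ) N ^ 2
      ≤ logSum (minusIndicator χ * minusIndicator χ) (N * N) :=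
        (sq _).trans_le (logSum.mul_le_convolution hminus hminus N)
    _ ≤ 2 * logSum (minusIndicator χ * minusIndicator χ * χ) (N * N) := by
        rw [logSum.convolution _ χ, mul_sum]
        refine sum_le_sum fun n hn ↦ ?_
        rw [mem_Ioc] at hn
        have hhalf := hχ.half_le_logSum (Nat.div_pos hn.2 hn.1)
        have := mul_le_mul_of_nonneg_left hhalf (div_nonneg (hminus_sq n) n.cast_nonneg)
        linarith
    _ ≤ 2 * (logSum (principalIndicator χ) (N * N) *
          logSum ((minusIndicator χ).pmul squareIndicator) (N * N)) := by
        rw [hχ.minus_mul_minus_mul]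
        gcongr
        exact logSum.convolution_le (factoredIndicator.nonneg _) hsquare _
    _ ≤ 2 * ((1 + Real.log (N * N : ℕ)) * ∑' k : ℕ, 1 / (k : ℝ) ^ 2) := by
        gcongr
        · exact logSum.nonneg hsquare _
        · exact logSum.factoredIndicator_le _ _
        · exact (logSum.le_of_le (fun n ↦ mul_le_of_le_one_left (squareIndicator.nonneg n)
            (factoredIndicator.le_one _ n)) _).trans (logSum.squareIndicator_le _)
    _ = 2 * (∑' k : ℕ, 1 / (k : ℝ) ^ 2) * (1 + 2 * Real.log N) := by
        rw [← sq, Nat.cast_pow, Real.log_pow, Nat.cast_ofNat]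
        ring

lemma exists_log_le_mul_logSum_plus_mul_logSum_minus : ∃ C, ∀ N : ℕ,
    Real.log N ≤ C * (logSum (plusIndicator χ) N * logSum (minusIndicator χ) N) := by
  obtain ⟨C, hC⟩ := logSum.exists_factoredIndicator_le hχ.finite_zeros
  have hnonneg (P : Set ℕ) := factoredIndicator.nonneg P
  refine ⟨C, fun N ↦ ?_⟩
  calc Real.log N ≤ logSum ζ N := logSum.log_le_zeta N
    _ ≤ logSum (ramifiedIndicator χ) N * logSum (principalIndicator χ) N := by
        rw [← ramified_mul_principal χ]
        exact logSum.convolution_le (hnonneg _) (hnonneg _) N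
    _ ≤ C * (logSum (plusIndicator χ) N * logSum (minusIndicator χ) N) := by
        gcongr
        · exact logSum.nonneg (hnonneg _) N
        · exact (logSum.nonneg (hnonneg _) N).trans (hC N)
        · exact hC N
        · rw [← hχ.plus_mul_minus]
          exact logSum.convolution_le (hnonneg _) (hnonneg _) N

end LogSumIndicator

end IsSignCharacter

section LogAsymptotics

lemma isEquivalent_log_natDiv {K : ℕ} (hK : 0 < K) :
    (fun N : ℕ ↦ Real.log (N / K : ℕ)) ~[atTop] fun N ↦ Real.log N := by
  have hK' : (0 : ℝ) < K := mod_cast hK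
  have hdiv : Tendsto (fun N : ℕ ↦ (N : ℝ) / K) atTop atTop :=
    tendsto_natCast_atTop_atTop.atTop_div_const hK'
  have hfloor : (fun N : ℕ ↦ ((N / K : ℕ) : ℝ)) ~[atTop] fun N ↦ (N : ℝ) / K := by
    simpa only [Function.comp_def, Nat.floor_div_eq_div] using
      isEquivalent_nat_floor.comp_tendsto hdiv
  have hconst : (fun _ : ℕ ↦ Real.log K) =o[atTop] fun N : ℕ ↦ Real.log N :=
    Real.isLittleO_const_log_atTop.comp_tendsto tendsto_natCast_atTop_atTop
  refine (hfloor.log hdiv).trans ((IsEquivalent.refl.sub_isLittleO hconst).congr_left ?_)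
  filter_upwards [eventually_ne_atTop 0] with N hN
  exact (Real.log_div (mod_cast hN) hK'.ne').symm

lemma isBigO_sqrt_log_of_sq_le {g : ℕ → ℝ} {C : ℝ}
    (hg : ∀ N : ℕ, g N ^ 2 ≤ C * (1 + 2 * Real.log N)) :
    g =O[atTop] fun N : ℕ ↦ √(Real.log N) := by
  have hone : (fun _ : ℕ ↦ (1 : ℝ)) =O[atTop] fun N : ℕ ↦ Real.log N :=
    (Real.isLittleO_const_log_atTop.comp_tendsto tendsto_natCast_atTop_atTop).isBigO
  have hsq : (fun N ↦ g N ^ 2) =O[atTop] fun N : ℕ ↦ Real.log N :=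
    (IsBigO.of_norm_le fun N ↦ by simpa using hg N).trans
      ((hone.add ((isBigO_refl _ _).const_mul_left 2)).const_mul_left C)
  refine IsBigO.of_pow two_ne_zero (hsq.congr_right fun N ↦ ?_)
  exact (Real.sq_sqrt (Real.log_natCast_nonneg N)).symm

lemma isTheta_natFloor_div_sqrt_log :
    (fun x : ℝ ↦ (⌊x⌋₊ : ℝ) / √(Real.log ⌊x⌋₊)) =Θ[atTop] fun x ↦ x / √(Real.log x) := by
  refine isEquivalent_nat_floor.isTheta.div
    ((isEquivalent_nat_floor.log tendsto_id).isTheta.sqrt ?_ ?_)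
  · exact .of_forall fun x ↦ Real.log_natCast_nonneg _
  · filter_upwards [eventually_ge_atTop 1] with x hx using Real.log_nonneg hx

lemma exists_mul_le_and_le_mul_of_isTheta {f g : ℝ → ℝ} (h : f =Θ[atTop] g)
    (hf : ∀ᶠ x in atTop, 0 ≤ f x) (hg : ∀ᶠ x in atTop, 0 ≤ g x) (a : ℝ) :
    ∃ c₁ c₂ x₀ : ℝ, 0 < c₁ ∧ 0 < c₂ ∧ a ≤ x₀ ∧
      ∀ x, x₀ ≤ x → c₁ * g x ≤ f x ∧ f x ≤ c₂ * g x := by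
  obtain ⟨c₂, hc₂, hupper⟩ := h.isBigO.exists_pos
  obtain ⟨c₁, hc₁, hlower⟩ := h.isBigO_symm.exists_pos
  obtain ⟨b, hb⟩ := eventually_atTop.1
    (hf.and (hg.and (hupper.bound.and hlower.bound)))
  refine ⟨c₁⁻¹, c₂, max a b, inv_pos.2 hc₁, hc₂, le_max_left a b, fun x hx ↦ ?_⟩
  obtain ⟨hfx, hgx, hup, hlow⟩ := hb x ((le_max_right a b).trans hx)
  rw [Real.norm_of_nonneg hfx, Real.norm_of_nonneg hgx] at hup hlow
  exact ⟨(inv_mul_le_iff₀ hc₁).2 hlow, hup⟩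

end LogAsymptotics

namespace IsSignCharacter

variable {χ : ArithmeticFunction ℝ} (hχ : IsSignCharacter χ)
include hχ

lemma isTheta_logSum_minus :
    logSum (minusIndicator χ) =Θ[atTop] fun N : ℕ ↦ √(Real.log N) := by
  obtain ⟨A, hA⟩ := hχ.exists_logSum_minus_sq_le
  obtain ⟨B, hB⟩ := hχ.exists_logSum_plus_sq_le
  obtain ⟨C, hC⟩ := hχ.exists_log_le_mul_logSum_plus_mul_logSum_minus
  refine ⟨isBigO_sqrt_log_of_sq_le hA, ?_⟩
  have hlog : (fun N : ℕ ↦ Real.log N) =O[atTop]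
      fun N ↦ logSum (plusIndicator χ) N * logSum (minusIndicator χ) N := by
    refine IsBigO.of_bound C (.of_forall fun N ↦ ?_)
    rw [Real.norm_of_nonneg (Real.log_natCast_nonneg N), Real.norm_of_nonneg
      (mul_nonneg (logSum.nonneg (factoredIndicator.nonneg _) N)
        (logSum.nonneg (factoredIndicator.nonneg _) N))]
    exact hC N
  have hsqrt : (fun N : ℕ ↦ √(Real.log N) * √(Real.log N)) =O[atTop]
      fun N ↦ √(Real.log N) * logSum (minusIndicator χ) N := by
    simp only [Real.mul_self_sqrt (Real.log_natCast_nonneg _)]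
    exact hlog.trans ((isBigO_sqrt_log_of_sq_le hB).mul (isBigO_refl _ _))
  have hne : ∀ᶠ N : ℕ in atTop, √(Real.log N) ≠ 0 := by
    filter_upwards [eventually_gt_atTop 1] with N hN
    exact (Real.sqrt_pos.2 (Real.log_pos (mod_cast hN))).ne'
  refine ((isBigO_mul_iff_isBigO_div hne).1 hsqrt).congr' .rfl ?_
  filter_upwards [hne] with N hN using mul_div_cancel_left₀ _ hN

lemma isBigO_sum_minus_mul_log :
    (fun N : ℕ ↦ (∑ n ∈ Ioc 0 N, minusIndicator χ n) * Real.log N) =O[atTop]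
      fun N ↦ N * √(Real.log N) := by
  obtain ⟨C, hC⟩ := (factoredIndicator.completelyMultiplicative _).exists_sum_mul_log_le
    (factoredIndicator.nonneg {p | χ p = -1}) (factoredIndicator.le_one {p | χ p = -1})
  have hone : (fun _ : ℕ ↦ (1 : ℝ)) =O[atTop] fun N : ℕ ↦ √(Real.log N) := by
    refine .of_bound 1 ?_
    filter_upwards [(Real.tendsto_log_atTop.comp tendsto_natCast_atTop_atTop).eventually_ge_atTop 1]
      with N hN
    simpa using (Real.one_le_sqrt.2 hN).trans (le_abs_self _)
  refine IsBigO.trans (.of_norm_le fun N ↦ ?_)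
    ((((isBigO_refl _ _).mul hχ.isTheta_logSum_minus.isBigO).const_mul_left C).add
      (((isBigO_refl (fun N : ℕ ↦ (N : ℝ)) atTop).mul hone).congr_left fun N ↦ mul_one _))
  rw [Real.norm_of_nonneg (mul_nonneg (sum_nonneg fun n _ ↦ factoredIndicator.nonneg _ n)
    (Real.log_natCast_nonneg N))]
  exact hC N

lemma isBigO_mul_sqrt_log_sum_minus_mul_log :
    (fun N : ℕ ↦ N * √(Real.log N)) =O[atTop]
      fun N ↦ (∑ n ∈ Ioc 0 N, minusIndicator χ n) * Real.log N := by
  obtain ⟨B, hB⟩ := hχ.exists_log_sub_le_logSum_minus_pmul_vonMangoldt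
  have hnonneg := factoredIndicator.nonneg {p | χ p = -1}
  obtain ⟨δ, hδ, K, hK, hsum⟩ := exists_mul_le_sum_of_log_le_logSum
    (fun n ↦ mul_nonneg (hnonneg n) vonMangoldt_nonneg) one_half_pos hB
  have hlogSum : (fun N : ℕ ↦ √(Real.log N)) =O[atTop]
      fun N ↦ logSum (minusIndicator χ) (N / K) := by
    refine ((isEquivalent_log_natDiv hK).isTheta.isBigO_symm.sqrt ?_).trans
      (hχ.isTheta_logSum_minus.isBigO_symm.comp_tendsto (Nat.tendsto_div_const_atTop hK.ne'))
    exact .of_forall fun N ↦ Real.log_natCast_nonneg _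
  refine ((isBigO_refl _ _).mul hlogSum).trans (.of_bound (δ / 2)⁻¹ (.of_forall fun N ↦ ?_))
  have hbound := (factoredIndicator.completelyMultiplicative _).mul_logSum_le_sum_mul_log
    hnonneg hδ.le hK hsum N
  rw [Real.norm_of_nonneg (mul_nonneg N.cast_nonneg (logSum.nonneg hnonneg _)),
    Real.norm_of_nonneg (mul_nonneg (sum_nonneg fun n _ ↦ hnonneg n)
      (Real.log_natCast_nonneg N))]
  exact (le_inv_mul_iff₀ (half_pos hδ)).2 hbound

lemma isTheta_sum_minus :
    (fun N : ℕ ↦ ∑ n ∈ Ioc 0 N, minusIndicator χ n) =Θ[atTop]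
      fun N ↦ N / √(Real.log N) := by
  have h : (fun N : ℕ ↦ (∑ n ∈ Ioc 0 N, minusIndicator χ n) * Real.log N) =Θ[atTop]
      fun N ↦ N * √(Real.log N) :=
    ⟨hχ.isBigO_sum_minus_mul_log, hχ.isBigO_mul_sqrt_log_sum_minus_mul_log⟩
  have hcancel : (fun N : ℕ ↦ (∑ n ∈ Ioc 0 N, minusIndicator χ n) * Real.log N / Real.log N)
      =ᶠ[atTop] fun N ↦ ∑ n ∈ Ioc 0 N, minusIndicator χ n := by
    filter_upwards [eventually_gt_atTop 1] with N hN
    exact mul_div_cancel_right₀ _ (Real.log_pos (mod_cast hN)).ne'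
  have hdiv := hcancel.symm.trans_isTheta (h.div (isTheta_refl (fun N : ℕ ↦ Real.log N) atTop))
  simpa only [mul_div_assoc, Real.sqrt_div_self, ← div_eq_mul_inv] using hdiv

end IsSignCharacter

lemma ncard_factored_eq_sum (P : Set ℕ) {x : ℝ} (hx : 0 ≤ x) :
    ({n : ℕ | 0 < n ∧ (n : ℝ) ≤ x ∧ ∀ p : ℕ, p.Prime → p ∣ n → p ∈ P}.ncard : ℝ) =
      ∑ n ∈ Ioc 0 ⌊x⌋₊, factoredIndicator P n := by
  classical
  have hset : {n : ℕ | 0 < n ∧ (n : ℝ) ≤ x ∧ ∀ p : ℕ, p.Prime → p ∣ n → p ∈ P} =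
      ({n ∈ Ioc 0 ⌊x⌋₊ | n ≠ 0 ∧ ∀ p : ℕ, p.Prime → p ∣ n → p ∈ P} : Finset ℕ) := by
    ext n
    simp only [Set.mem_ofPred_eq, coe_filter, mem_Ioc, Nat.le_floor_iff hx]
    grind
  simp only [hset, Set.ncard_coe_finset, card_filter, Nat.cast_sum, Nat.cast_ite, Nat.cast_one,
    Nat.cast_zero, factoredIndicator.apply]

theorem stmt_8_general {χ : ArithmeticFunction ℝ} (hχ : IsSignCharacter χ) :
    ∃ c₁ c₂ x₀ : ℝ, 0 < c₁ ∧ 0 < c₂ ∧ 3 ≤ x₀ ∧ ∀ x : ℝ, x₀ ≤ x →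
      c₁ * x / Real.log x ^ ((1 : ℝ) / 2) ≤
        ({n : ℕ | 0 < n ∧ (n : ℝ) ≤ x ∧ ∀ p : ℕ, p.Prime → p ∣ n → χ p = -1}.ncard : ℝ) ∧
      ({n : ℕ | 0 < n ∧ (n : ℝ) ≤ x ∧ ∀ p : ℕ, p.Prime → p ∣ n → χ p = -1}.ncard : ℝ) ≤
        c₂ * x / Real.log x ^ ((1 : ℝ) / 2) := by
  have hfloor : (fun x : ℝ ↦ ∑ n ∈ Ioc 0 ⌊x⌋₊, minusIndicator χ n) =Θ[atTop]
      fun x ↦ (⌊x⌋₊ : ℝ) / √(Real.log ⌊x⌋₊) :=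
    ⟨hχ.isTheta_sum_minus.isBigO.comp_tendsto tendsto_nat_floor_atTop,
      hχ.isTheta_sum_minus.isBigO_symm.comp_tendsto tendsto_nat_floor_atTop⟩
  have hnonneg : ∀ᶠ x : ℝ in atTop, 0 ≤ x / √(Real.log x) := by
    filter_upwards [eventually_ge_atTop 0] with x hx using div_nonneg hx (Real.sqrt_nonneg _)
  obtain ⟨c₁, c₂, x₀, hc₁, hc₂, hx₀, h⟩ := exists_mul_le_and_le_mul_of_isTheta
    (hfloor.trans isTheta_natFloor_div_sqrt_log)
    (.of_forall fun x ↦ sum_nonneg fun n _ ↦ factoredIndicator.nonneg _ n) hnonneg 3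
  refine ⟨c₁, c₂, x₀, hc₁, hc₂, hx₀, fun x hx ↦ ?_⟩
  have hncard := ncard_factored_eq_sum {p | χ p = -1} (show 0 ≤ x by linarith)
  simp only [Set.mem_ofPred_eq] at hncard
  rw [hncard, ← Real.sqrt_eq_rpow, mul_div_assoc, mul_div_assoc]
  exact h x hx

/-- The nonprincipal Dirichlet character modulo `6`, as an arithmetic function. -/
noncomputable def signModSix : ArithmeticFunction ℝ :=
  ⟨fun n ↦ if n % 6 = 1 then 1 else if n % 6 = 5 then -1 else 0, by simp⟩

namespace signModSix

lemma apply (n : ℕ) :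
    signModSix n = if n % 6 = 1 then 1 else if n % 6 = 5 then -1 else 0 := rfl

lemma eq_neg_one_iff (n : ℕ) : signModSix n = -1 ↔ n % 6 = 5 := by
  rw [apply]
  split_ifs <;> norm_num <;> omega

lemma completelyMultiplicative : CompletelyMultiplicative signModSix := by
  refine ⟨by simp [apply], fun m n ↦ ?_⟩
  simp only [apply, Nat.mul_mod m n]
  have hm := m.mod_lt (show 6 > 0 by norm_num)
  have hn := n.mod_lt (show 6 > 0 by norm_num)
  interval_cases m % 6 <;> interval_cases n % 6 <;> norm_num

lemma sum_Ioc (N : ℕ) :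
    ∑ n ∈ Ioc 0 N, signModSix n = if N % 6 = 0 ∨ N % 6 = 5 then 0 else 1 := by
  induction N with
  | zero => simp
  | succ n ih =>
    rw [sum_Ioc_succ_top n.zero_le, ih, apply, Nat.add_mod]
    have hn := n.mod_lt (show 6 > 0 by norm_num)
    interval_cases n % 6 <;> norm_num

lemma prime_dvd_six_of_eq_zero {p : ℕ} (hp : p.Prime) (h : signModSix p = 0) : p ∣ 6 := by
  have hmod : p % 6 ≠ 1 ∧ p % 6 ≠ 5 := by
    constructor <;> intro hp' <;> norm_num [apply, hp'] at h
  rcases (by omega : 2 ∣ p ∨ 3 ∣ p) with h2 | h3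
  · exact (Nat.prime_dvd_prime_iff_eq Nat.prime_two hp).1 h2 ▸ ⟨3, rfl⟩
  · exact (Nat.prime_dvd_prime_iff_eq Nat.prime_three hp).1 h3 ▸ ⟨2, rfl⟩

lemma isSignCharacter : IsSignCharacter signModSix where
  completelyMultiplicative := completelyMultiplicative
  apply_eq n := by rw [apply]; split_ifs <;> simp
  finite_zeros := (Nat.divisors 6).finite_toSet.subset fun p ⟨hp, h⟩ ↦ by
    simpa using prime_dvd_six_of_eq_zero hp h
  sum_Ioc_nonneg N := by rw [sum_Ioc]; split_ifs <;> norm_num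
  exists_sum_Ioc_le := ⟨1, fun N ↦ by rw [sum_Ioc]; split_ifs <;> norm_num⟩

end signModSix

end

/-- The number of positive integers `n ≤ x` all of whose prime factors
are `≡ 5 (mod 6)` has exact order of magnitude `x/(log x)^{1/2}`. -/
theorem stmt_8 :
    ∃ c₁ c₂ x₀ : ℝ, 0 < c₁ ∧ 0 < c₂ ∧ 3 ≤ x₀ ∧ ∀ x : ℝ, x₀ ≤ x →
      c₁ * x / Real.log x ^ ((1 : ℝ) / 2) ≤
        ({n : ℕ | 0 < n ∧ (n : ℝ) ≤ x ∧
          ∀ p : ℕ, p.Prime → p ∣ n → p % 6 = 5}.ncard : ℝ) ∧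
      ({n : ℕ | 0 < n ∧ (n : ℝ) ≤ x ∧
          ∀ p : ℕ, p.Prime → p ∣ n → p % 6 = 5}.ncard : ℝ) ≤
        c₂ * x / Real.log x ^ ((1 : ℝ) / 2) := by
  simpa only [signModSix.eq_neg_one_iff] using stmt_8_general signModSix.isSignCharacter
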